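/- Let A ⊆ [N] be a B_k*-set with N ≥ (2k^{9/2})^k. Then |A| ≤ 16 · k^{3/2} · N^{1/k}. -/

import Mathlib

open Finset

open scoped Classical in
/-- `M_k(A)`: number of solutions of `x₁+⋯+x_k = y₁+⋯+y_k` in `A^{2k}`. -/
noncomputable def Mcount (k : ℕ) (A : Finset ℤ) : ℕ :=
  (((Fintype.piFinset fun _ : Fin k => A) ×ˢ (Fintype.piFinset fun _ : Fin k => A)).filter
    (fun p => (∑ i, p.1 i) = ∑ i, p.2 i)).card

open scoped Classical in
/-- `S_k(A)`: solutions with the `x_i` pairwise distinct and the `y_i` pairwise distinct. -/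
noncomputable def Scount (k : ℕ) (A : Finset ℤ) : ℕ :=
  (((Fintype.piFinset fun _ : Fin k => A) ×ˢ (Fintype.piFinset fun _ : Fin k => A)).filter
    (fun p => (∑ i, p.1 i) = (∑ i, p.2 i) ∧ Function.Injective p.1 ∧ Function.Injective p.2)).card

open scoped Classical in
/-- `S_k^*(A₁, A₂)`: solutions with `x ∈ A₁^k`, `y ∈ A₂^k` and all `2k` entries pairwise distinct. -/
noncomputable def Sstar2 (k : ℕ) (A₁ A₂ : Finset ℤ) : ℕ :=
  (((Fintype.piFinset fun _ : Fin k => A₁) ×ˢ (Fintype.piFinset fun _ : Fin k => A₂)).filter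
    (fun p => (∑ i, p.1 i) = (∑ i, p.2 i) ∧ Function.Injective p.1 ∧ Function.Injective p.2 ∧
      ∀ i j, p.1 i ≠ p.2 j)).card

/-- `S_k^*(A)`. -/
noncomputable def Sstar (k : ℕ) (A : Finset ℤ) : ℕ := Sstar2 k A A

/-- `A` is a weak `B_k`-set (`B_k^*`-set): there is no solution of
`x₁+⋯+x_k = y₁+⋯+y_k` with all `2k` elements of `A` pairwise distinct. -/
def IsWeakBkSet (k : ℕ) (A : Finset ℤ) : Prop :=
  ∀ x y : Fin k → ℤ, (∀ i, x i ∈ A) → (∀ i, y i ∈ A) →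
    (∑ i, x i) = (∑ i, y i) → Function.Injective x → Function.Injective y →
      ∃ i j, x i = y j

/-!
Write `n = #A`. By orthogonality of the characters of `ZMod (k * N + 1)`, the number of solutions
of `x₁ + ⋯ + xₖ = y₁ + ⋯ + yₖ` with `2k` distinct unknowns in `A`, times `k * N + 1`, is the sum
over all characters `ψ` of `P_ψ`, the sum of `∏ ψ xᵢ * ∏ conj (ψ yᵢ)` over the `2k`-tuples of
distinct elements of `A`. The trivial character contributes `n (n - 1) ⋯ (n - 2k + 1) ≈ n ^ (2k)`,
and every other one contributes at least `-(13 k n) ^ k`, whence `n ^ k ≲ k N (13 k) ^ k` if there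
is no solution.

The lower bound comes from adding the letters `ψ` and `conj ψ` one at a time: up to an error that
counts coincidences with the earlier unknowns, each letter multiplies the sum over distinct tuples
by `f = ∑ a ∈ A, ψ a` or its conjugate. If `‖f‖ ≤ 3 √(k n)`, this recursion yields
`‖P_ψ‖ ≤ (18 / 5 * √(k n)) ^ (2k)`. If `‖f‖ ≥ 3 √(k n)`, the error is smaller than the main term, so
a pair of conjugate letters multiplies by `‖f‖ ^ 2` up to a relative error of at most `1`, and
`P_ψ ≥ 0` follows.
-/

open scoped ComplexConjugate

section DistinctSum

variable {α R : Type*} [DecidableEq α]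

/-- The sum of `g₁ a₁ ⋯ gₘ aₘ` over all `m`-tuples of pairwise distinct elements `aᵢ` of `S`, for a
word `[g₁, …, gₘ]` of weight functions. The recursion sums over `a₁` outermost. -/
def distinctSum [CommSemiring R] : Finset α → List (α → R) → R
  | _, [] => 1
  | S, g :: w => ∑ a ∈ S, g a * distinctSum (S.erase a) w

/-- The `m`-tuples of pairwise distinct elements of `S`. -/
def distinctTuples (S : Finset α) (m : ℕ) : Finset (Fin m → α) :=
  {x ∈ Fintype.piFinset fun _ => S | Function.Injective x}

lemma mem_distinctTuples {S : Finset α} {m : ℕ} {x : Fin m → α} :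
    x ∈ distinctTuples S m ↔ (∀ i, x i ∈ S) ∧ Function.Injective x := by
  simp [distinctTuples]

lemma sum_distinctTuples_succ {M : Type*} [AddCommMonoid M] (S : Finset α) {m : ℕ}
    (f : (Fin (m + 1) → α) → M) :
    ∑ x ∈ distinctTuples S (m + 1), f x =
      ∑ a ∈ S, ∑ x ∈ distinctTuples (S.erase a) m, f (Fin.cons a x) := by
  rw [sum_sigma']
  refine sum_bij' (fun x _ => ⟨x 0, Fin.tail x⟩) (fun p _ => Fin.cons p.1 p.2) ?_ ?_ ?_ ?_ ?_
  · intro x hx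
    obtain ⟨hxS, hinj⟩ := mem_distinctTuples.1 hx
    simp only [mem_sigma, mem_distinctTuples, mem_erase]
    exact ⟨hxS 0, fun i => ⟨hinj.ne (Fin.succ_ne_zero i), hxS i.succ⟩,
      hinj.comp (Fin.succ_injective m)⟩
  · rintro ⟨a, x⟩ hp
    simp only [mem_sigma, mem_distinctTuples, mem_erase] at hp
    obtain ⟨ha, hxS, hinj⟩ := hp
    refine mem_distinctTuples.2
      ⟨Fin.cases ha fun i => (hxS i).2, Fin.cons_injective_iff.2 ⟨?_, hinj⟩⟩
    rintro ⟨i, hi⟩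
    exact (hxS i).1 hi
  · intro x _
    exact Fin.cons_self_tail x
  · intro p _
    rfl
  · intro x _
    rw [Fin.cons_self_tail]

section CommSemiring

variable [CommSemiring R] (S : Finset α)

@[simp]
lemma distinctSum_nil : distinctSum S ([] : List (α → R)) = 1 := rfl

lemma distinctSum_cons (g : α → R) (w : List (α → R)) :
    distinctSum S (g :: w) = ∑ a ∈ S, g a * distinctSum (S.erase a) w := rfl

lemma distinctSum_ofFn {m : ℕ} (w : Fin m → α → R) :
    distinctSum S (List.ofFn w) = ∑ x ∈ distinctTuples S m, ∏ i, w i (x i) := by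
  induction m generalizing S with
  | zero => simp [distinctTuples, Function.injective_of_subsingleton]
  | succ m ih =>
    rw [List.ofFn_succ, distinctSum_cons, sum_distinctTuples_succ]
    refine sum_congr rfl fun a _ => ?_
    rw [ih, mul_sum]
    exact sum_congr rfl fun x _ => by simp [Fin.prod_univ_succ]

lemma distinctSum_perm {w w' : List (α → R)} (h : w.Perm w') :
    distinctSum S w = distinctSum S w' := by
  induction h generalizing S with
  | nil => rfl
  | cons g _ ih => simp only [distinctSum_cons, ih]
  | swap g h w =>
    simp only [distinctSum_cons, mul_sum]
    rw [sum_comm' (t' := S) (s' := fun b => S.erase b) (by grind)]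
    refine sum_congr rfl fun b _ => sum_congr rfl fun a _ => ?_
    rw [erase_right_comm]
    ring
  | trans _ _ ih₁ ih₂ => rw [ih₁, ih₂]

lemma distinctSum_replicate_one (m : ℕ) :
    distinctSum S (List.replicate m (1 : α → R)) = (#S).descFactorial m := by
  induction m generalizing S with
  | zero => simp
  | succ m ih =>
    have herase : ∀ a ∈ S, (1 : α → R) a * distinctSum (S.erase a) (List.replicate m 1) =
        ((#S - 1).descFactorial m : ℕ) := fun a ha => by
      rw [ih, card_erase_of_mem ha, Pi.one_apply, one_mul]
    rw [List.replicate_succ, distinctSum_cons, sum_congr rfl herase, sum_const, nsmul_eq_mul]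
    cases hS : #S with
    | zero => simp
    | succ n => rw [Nat.succ_descFactorial_succ, Nat.cast_mul, Nat.add_sub_cancel]

lemma map_distinctSum {R' : Type*} [CommSemiring R'] (φ : R →+* R') (w : List (α → R)) :
    φ (distinctSum S w) = distinctSum S (w.map (φ ∘ ·)) := by
  induction w generalizing S with
  | nil => simp
  | cons g w ih => simp [distinctSum_cons, ih]

lemma distinctSum_eq_erase_add {a : α} (ha : a ∈ S) (w : List (α → R)) :
    distinctSum S w = distinctSum (S.erase a) w +
      ∑ i : Fin w.length, w[i] a * distinctSum (S.erase a) (w.eraseIdx i) := by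
  induction w generalizing S with
  | nil => simp
  | cons g w ih =>
    have hrest : ∀ b ∈ S.erase a, g b * distinctSum (S.erase b) w =
        g b * distinctSum ((S.erase a).erase b) w + ∑ i : Fin w.length,
          w[i] a * (g b * distinctSum ((S.erase a).erase b) (w.eraseIdx i)) := by
      intro b hb
      rw [ih (S.erase b) (mem_erase.2 ⟨(ne_of_mem_erase hb).symm, ha⟩), erase_right_comm, mul_add,
        mul_sum]
      simp only [mul_left_comm]
    rw [distinctSum_cons, ← add_sum_erase _ _ ha, sum_congr rfl hrest, sum_add_distrib,
      ← distinctSum_cons, sum_comm]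
    simp only [← mul_sum, ← distinctSum_cons]
    rw [add_left_comm]
    congr 1
    exact (Fin.sum_univ_succ (n := w.length) fun i =>
      (g :: w)[i] a * distinctSum (S.erase a) ((g :: w).eraseIdx i)).symm

lemma sum_mul_distinctSum (g : α → R) (w : List (α → R)) :
    (∑ a ∈ S, g a) * distinctSum S w = distinctSum S (g :: w) +
      ∑ a ∈ S, g a * ∑ i : Fin w.length, w[i] a * distinctSum (S.erase a) (w.eraseIdx i) := by
  rw [distinctSum_cons, sum_mul, ← sum_add_distrib]
  exact sum_congr rfl fun a ha => by rw [distinctSum_eq_erase_add S ha, mul_add]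

end CommSemiring

section NormedField

variable {𝕜 : Type*} [NormedField 𝕜] {S : Finset α} {g : α → 𝕜} {w : List (α → 𝕜)}

lemma norm_sum_mul_distinctSum_eraseIdx_le {a : α} {B : ℝ} (hw : ∀ h ∈ w, ‖h a‖ ≤ 1)
    (hB : ∀ i : Fin w.length, ‖distinctSum S (w.eraseIdx i)‖ ≤ B) :
    ‖∑ i : Fin w.length, w[i] a * distinctSum S (w.eraseIdx i)‖ ≤ w.length * B := by
  have hterm : ∀ i ∈ univ, ‖w[i] a * distinctSum S (w.eraseIdx (i : Fin w.length))‖ ≤ B := by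
    intro i _
    rw [norm_mul]
    exact (mul_le_of_le_one_left (norm_nonneg _) (hw _ (List.getElem_mem i.2))).trans (hB i)
  simpa using norm_sum_le_of_le _ hterm

lemma norm_distinctSum_cons_sub_le_card_mul {B : ℝ} (hg : ∀ a ∈ S, ‖g a‖ ≤ 1)
    (hw : ∀ h ∈ w, ∀ a ∈ S, ‖h a‖ ≤ 1)
    (hB : ∀ a ∈ S, ∀ i : Fin w.length, ‖distinctSum (S.erase a) (w.eraseIdx i)‖ ≤ B) :
    ‖distinctSum S (g :: w) - (∑ a ∈ S, g a) * distinctSum S w‖ ≤ #S * (w.length * B) := by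
  rw [sum_mul_distinctSum, sub_add_cancel_left, norm_neg, ← nsmul_eq_mul, ← sum_const]
  refine norm_sum_le_of_le _ fun a ha => ?_
  rw [norm_mul]
  exact (mul_le_of_le_one_left (norm_nonneg _) (hg a ha)).trans
    (norm_sum_mul_distinctSum_eraseIdx_le (fun h hh => hw h hh a ha) (hB a ha))

lemma abs_norm_sum_erase_sub_le {E : Type*} [SeminormedAddCommGroup E] {f : α → E} {a : α}
    (ha : a ∈ S) :
    |‖∑ b ∈ S.erase a, f b‖ - ‖∑ b ∈ S, f b‖| ≤ ‖f a‖ := by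
  simpa [sum_erase_eq_sub ha] using abs_norm_sub_norm_le (∑ b ∈ S.erase a, f b) (∑ b ∈ S, f b)

lemma norm_distinctSum_cons_le_pow_of_eraseIdx {F l : ℝ} (hl : 0 < l)
    (hg : ∀ a ∈ S, ‖g a‖ ≤ 1) (hw : ∀ h ∈ w, ∀ a ∈ S, ‖h a‖ ≤ 1) (hgF : ‖∑ a ∈ S, g a‖ ≤ F)
    (hFl : F * l + #S * w.length ≤ l ^ 2) (htail : ‖distinctSum S w‖ ≤ l ^ w.length)
    (herase : ∀ a ∈ S, ∀ i : Fin w.length,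
      ‖distinctSum (S.erase a) (w.eraseIdx i)‖ ≤ l ^ (w.eraseIdx i).length) :
    ‖distinctSum S (g :: w)‖ ≤ l ^ (w.length + 1) := by
  have herase' : ∀ a ∈ S, ∀ i : Fin w.length,
      ‖distinctSum (S.erase a) (w.eraseIdx i)‖ ≤ l ^ w.length / l := by
    intro a ha i
    refine (herase a ha i).trans_eq (eq_div_of_mul_eq hl.ne' ?_)
    rw [← pow_succ, List.length_eraseIdx_add_one i.2]
  calc ‖distinctSum S (g :: w)‖
      ≤ ‖(∑ a ∈ S, g a) * distinctSum S w‖ + #S * (w.length * (l ^ w.length / l)) := by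
        linarith [norm_distinctSum_cons_sub_le_card_mul hg hw herase',
          norm_sub_norm_le (distinctSum S (g :: w)) ((∑ a ∈ S, g a) * distinctSum S w)]
    _ ≤ F * l ^ w.length + #S * (w.length * (l ^ w.length / l)) := by
        rw [norm_mul]
        have hF : 0 ≤ F := (norm_nonneg _).trans hgF
        gcongr
    _ = (F * l + #S * w.length) * (l ^ w.length / l) := by field_simp
    _ ≤ l ^ 2 * (l ^ w.length / l) := by gcongr
    _ = l ^ (w.length + 1) := by field_simp; ring

theorem norm_distinctSum_le_pow {F l : ℝ} (hl : 0 < l) (hw : ∀ g ∈ w, ∀ a ∈ S, ‖g a‖ ≤ 1)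
    (hF : ∀ g ∈ w, ‖∑ a ∈ S, g a‖ + w.length / 2 ≤ F) (hFl : F * l + #S * w.length ≤ l ^ 2) :
    ‖distinctSum S w‖ ≤ l ^ w.length := by
  induction hm : w.length using Nat.strong_induction_on generalizing S w with | _ m ih
  subst hm
  rcases w with _ | ⟨g, w⟩
  · simp
  simp only [List.forall_mem_cons, List.length_cons, Nat.cast_add_one] at hw hF hFl ih ⊢
  obtain ⟨hg, hw⟩ := hw
  obtain ⟨hgF, hwF⟩ := hF
  have hFl' : F * l + #S * w.length ≤ l ^ 2 := by linarith [(#S).cast_nonneg (α := ℝ)]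
  refine norm_distinctSum_cons_le_pow_of_eraseIdx hl hg hw ?_ hFl'
    (ih _ (Nat.lt_succ_self _) hw (fun h hh => ?_) hFl' rfl) fun a ha i => ?_
  · linarith [w.length.cast_nonneg (α := ℝ)]
  · linarith [hwF h hh]
  have hlen : (w.eraseIdx i).length + 1 = w.length := List.length_eraseIdx_add_one i.2
  have hlen' : ((w.eraseIdx i).length : ℝ) + 1 = w.length := by exact_mod_cast hlen
  have hmem : ∀ h ∈ w.eraseIdx i, h ∈ w := fun h hh => List.mem_of_mem_eraseIdx hh
  refine ih _ (by lia) (fun h hh b hb => hw h (hmem h hh) b (mem_of_mem_erase hb))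
    (fun h hh => ?_) ?_ rfl
  · have hone := hw h (hmem h hh) a ha
    have hsum := abs_le.1 (abs_norm_sum_erase_sub_le (f := h) ha)
    linarith [hwF h (hmem h hh)]
  · refine le_trans ?_ hFl'
    gcongr
    · exact erase_subset a S
    · lia

end NormedField

end DistinctSum

section HasLargeSums

variable {α 𝕜 : Type*} [NormedField 𝕜] {S : Finset α} {g : α → 𝕜} {w w' : List (α → 𝕜)} {c ε : ℝ}

/-- The letters of `w` are bounded by `1` on `S` and have sums over `S` that exceed `c + ε` in norm.
In this regime prepending a letter `g` to `w` multiplies `distinctSum S w` by `∑ a ∈ S, g a`, up to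
a relative error `ε`. The slack `w.length / 2` makes the condition pass from `S` to `S.erase a` when
`w` loses two letters at the same time. -/
structure HasLargeSums (c ε : ℝ) (S : Finset α) (w : List (α → 𝕜)) : Prop where
  norm_le_one : ∀ g ∈ w, ∀ a ∈ S, ‖g a‖ ≤ 1
  le_norm_sum : ∀ g ∈ w, c + ε + w.length / 2 ≤ ‖∑ a ∈ S, g a‖
  length_lt : w.length < c
  card_mul_length_le : #S * w.length ≤ ε * (c - w.length)

namespace HasLargeSums

lemma pos (h : HasLargeSums c ε S w) : 0 < c :=
  w.length.cast_nonneg.trans_lt h.length_lt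

lemma nonneg (h : HasLargeSums c ε S w) : 0 ≤ ε :=
  nonneg_of_mul_nonneg_left (le_trans (by positivity) h.card_mul_length_le)
    (sub_pos.2 h.length_lt)

lemma add_le_norm_sum (h : HasLargeSums c ε S w) (hg : g ∈ w) : c + ε ≤ ‖∑ a ∈ S, g a‖ := by
  linarith [h.le_norm_sum g hg, w.length.cast_nonneg (α := ℝ)]

lemma mono (h : HasLargeSums c ε S w) (hw : w'.Subperm w) : HasLargeSums c ε S w' := by
  have hlen : (w'.length : ℝ) ≤ w.length := by exact_mod_cast hw.length_le
  refine ⟨fun g hg => h.norm_le_one g (hw.subset hg), fun g hg => ?_, hlen.trans_lt h.length_lt, ?_⟩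
  · linarith [h.le_norm_sum g (hw.subset hg)]
  · have := h.nonneg
    calc (#S : ℝ) * w'.length ≤ #S * w.length := by gcongr
      _ ≤ ε * (c - w.length) := h.card_mul_length_le
      _ ≤ ε * (c - w'.length) := by gcongr

variable [DecidableEq α]

lemma erase (h : HasLargeSums c ε S w) (hw : w'.Subperm w) (hlen : w'.length + 2 ≤ w.length)
    {a : α} (ha : a ∈ S) : HasLargeSums c ε (S.erase a) w' := by
  have hlen' : (w'.length : ℝ) + 2 ≤ w.length := by exact_mod_cast hlen
  have hw' := h.mono hw
  refine ⟨fun g hg b hb => hw'.norm_le_one g hg b (mem_of_mem_erase hb), fun g hg => ?_,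
    hw'.length_lt, le_trans ?_ hw'.card_mul_length_le⟩
  · have hone := hw'.norm_le_one g hg a ha
    have hsum := abs_le.1 (abs_norm_sum_erase_sub_le (f := g) ha)
    linarith [h.le_norm_sum g (hw.subset hg)]
  · gcongr
    exact erase_subset a S

end HasLargeSums

variable [DecidableEq α]

lemma mul_norm_distinctSum_le_of_norm_sub_le (hg : c + ε ≤ ‖∑ a ∈ S, g a‖)
    (h : ‖distinctSum S (g :: w) - (∑ a ∈ S, g a) * distinctSum S w‖ ≤ ε * ‖distinctSum S w‖) :
    c * ‖distinctSum S w‖ ≤ ‖distinctSum S (g :: w)‖ := by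
  have hlead : (c + ε) * ‖distinctSum S w‖ ≤ ‖(∑ a ∈ S, g a) * distinctSum S w‖ := by
    rw [norm_mul]
    gcongr
  have htri := norm_sub_norm_le ((∑ a ∈ S, g a) * distinctSum S w) (distinctSum S (g :: w))
  rw [norm_sub_rev] at htri
  linarith

lemma sub_length_mul_norm_distinctSum_erase_le (hc : 0 < c) {a : α} (ha : a ∈ S)
    (hw : ∀ g ∈ w, ‖g a‖ ≤ 1)
    (h : ∀ i : Fin w.length,
      c * ‖distinctSum (S.erase a) (w.eraseIdx i)‖ ≤ ‖distinctSum (S.erase a) w‖) :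
    (c - w.length) * ‖distinctSum (S.erase a) w‖ ≤ c * ‖distinctSum S w‖ := by
  have hsum := norm_sum_mul_distinctSum_eraseIdx_le hw fun i => (le_div_iff₀' hc).2 (h i)
  have htri := norm_sub_le_norm_add (distinctSum (S.erase a) w)
    (∑ i : Fin w.length, w[i] a * distinctSum (S.erase a) (w.eraseIdx i))
  rw [← distinctSum_eq_erase_add S ha] at htri
  calc (c - w.length) * ‖distinctSum (S.erase a) w‖
      = c * (‖distinctSum (S.erase a) w‖ - w.length * (‖distinctSum (S.erase a) w‖ / c)) := by
        field_simp
    _ ≤ c * ‖distinctSum S w‖ := by gcongr; linarith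

namespace HasLargeSums

lemma norm_distinctSum_cons_sub_le_of_mul_norm_eraseIdx_le (h : HasLargeSums c ε S (g :: w))
    (hgrowth : ∀ T : Finset α, ∀ v : List (α → 𝕜), v.length ≤ w.length → HasLargeSums c ε T v →
      ∀ i : Fin v.length, c * ‖distinctSum T (v.eraseIdx i)‖ ≤ ‖distinctSum T v‖) :
    ‖distinctSum S (g :: w) - (∑ a ∈ S, g a) * distinctSum S w‖ ≤ ε * ‖distinctSum S w‖ := by
  have hsub : w.Subperm (g :: w) := (List.sublist_cons_self g w).subperm
  have hw := h.mono hsub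
  have hpos : 0 < c - w.length := sub_pos.2 hw.length_lt
  have herase : ∀ a ∈ S, ∀ i : Fin w.length,
      ‖distinctSum (S.erase a) (w.eraseIdx i)‖ ≤ ‖distinctSum S w‖ / (c - w.length) := by
    intro a ha i
    have hv : (w.eraseIdx i).Subperm w := (List.eraseIdx_sublist w i).subperm
    have hlen : (w.eraseIdx i).length + 1 = w.length := List.length_eraseIdx_add_one i.2
    rw [le_div_iff₀' hpos]
    calc (c - w.length) * ‖distinctSum (S.erase a) (w.eraseIdx i)‖
        ≤ (c - (w.eraseIdx i).length) * ‖distinctSum (S.erase a) (w.eraseIdx i)‖ := by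
          gcongr
          lia
      _ ≤ c * ‖distinctSum S (w.eraseIdx i)‖ :=
          sub_length_mul_norm_distinctSum_erase_le hw.pos ha
            (fun g hg => hw.norm_le_one g (hv.subset hg) a ha)
            (hgrowth _ _ (by lia) (h.erase (hv.trans hsub) (by simp [← hlen]) ha))
      _ ≤ ‖distinctSum S w‖ := hgrowth S w le_rfl hw i
  calc ‖distinctSum S (g :: w) - (∑ a ∈ S, g a) * distinctSum S w‖
      ≤ #S * (w.length * (‖distinctSum S w‖ / (c - w.length))) :=
        norm_distinctSum_cons_sub_le_card_mul (h.norm_le_one g List.mem_cons_self) hw.norm_le_one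
          herase
    _ = #S * w.length / (c - w.length) * ‖distinctSum S w‖ := by ring
    _ ≤ ε * ‖distinctSum S w‖ := by
        gcongr
        exact (div_le_iff₀ hpos).2 hw.card_mul_length_le

theorem mul_norm_distinctSum_eraseIdx_le (h : HasLargeSums c ε S w) (i : Fin w.length) :
    c * ‖distinctSum S (w.eraseIdx i)‖ ≤ ‖distinctSum S w‖ := by
  obtain ⟨m, hm⟩ : ∃ m, w.length = m := ⟨_, rfl⟩
  induction m using Nat.strong_induction_on generalizing S w with | _ m ih
  subst hm
  have hperm : (w[i] :: w.eraseIdx i).Perm w := List.getElem_cons_eraseIdx_perm i.2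
  have hlen : (w.eraseIdx i).length + 1 = w.length := List.length_eraseIdx_add_one i.2
  rw [← distinctSum_perm S hperm]
  refine mul_norm_distinctSum_le_of_norm_sub_le (h.add_le_norm_sum (List.getElem_mem i.2)) ?_
  exact (h.mono hperm.subperm).norm_distinctSum_cons_sub_le_of_mul_norm_eraseIdx_le
    fun T v hv hTv j => ih _ (hv.trans_lt hlen.le) hTv j rfl

theorem norm_distinctSum_cons_sub_le (h : HasLargeSums c ε S (g :: w)) :
    ‖distinctSum S (g :: w) - (∑ a ∈ S, g a) * distinctSum S w‖ ≤ ε * ‖distinctSum S w‖ :=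
  h.norm_distinctSum_cons_sub_le_of_mul_norm_eraseIdx_le
    fun _ _ _ hTv i => hTv.mul_norm_distinctSum_eraseIdx_le i

end HasLargeSums

end HasLargeSums

section BalancedWord

variable {α : Type*}

/-- The word consisting of `k` copies of `z` and `k` copies of its complex conjugate. When `z` is a
character, its distinct sum is the contribution of `z` to the number of solutions of
`x₁ + ⋯ + xₖ = y₁ + ⋯ + yₖ` with `2k` distinct unknowns. -/
noncomputable def balancedWord (k : ℕ) (z : α → ℂ) : List (α → ℂ) :=
  List.replicate k z ++ List.replicate k (conj ∘ z)

variable {k : ℕ} {z : α → ℂ} {S : Finset α}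

@[simp]
lemma length_balancedWord : (balancedWord k z).length = 2 * k := by
  simp [balancedWord, two_mul]

lemma eq_or_eq_conj_of_mem_balancedWord {g : α → ℂ} (hg : g ∈ balancedWord k z) :
    g = z ∨ g = conj ∘ z :=
  (List.mem_append.1 hg).imp List.eq_of_mem_replicate List.eq_of_mem_replicate

lemma balancedWord_sublist {j : ℕ} (hjk : j ≤ k) : (balancedWord j z).Sublist (balancedWord k z) :=
  .append (List.replicate_sublist_replicate z |>.2 hjk)
    (List.replicate_sublist_replicate _ |>.2 hjk)

lemma cons_cons_balancedWord_perm :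
    (z :: (conj ∘ z) :: balancedWord k z).Perm (balancedWord (k + 1) z) :=
  List.perm_middle.symm.cons z

lemma norm_apply_of_mem_balancedWord {g : α → ℂ} (hg : g ∈ balancedWord k z) (a : α) :
    ‖g a‖ = ‖z a‖ := by
  rcases eq_or_eq_conj_of_mem_balancedWord hg with rfl | rfl <;> simp

lemma norm_sum_of_mem_balancedWord {g : α → ℂ} (hg : g ∈ balancedWord k z) :
    ‖∑ a ∈ S, g a‖ = ‖∑ a ∈ S, z a‖ := by
  rcases eq_or_eq_conj_of_mem_balancedWord hg with rfl | rfl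
  · rfl
  · simp [← map_sum]

lemma re_nonneg_of_norm_sub_mul_le {f q r : ℂ} {p ε : ℝ} (hp : 0 ≤ p) (hε : 0 ≤ ε)
    (hεf : (‖f‖ + ε) ^ 2 ≤ 2 * ‖f‖ ^ 2) (hq : ‖q - conj f * p‖ ≤ ε * p)
    (hr : ‖r - f * q‖ ≤ ε * ‖q‖) : 0 ≤ r.re := by
  have hq_norm : ‖q‖ ≤ (‖f‖ + ε) * p := by
    have htri := norm_sub_norm_le q (conj f * p)
    simp only [norm_mul, RCLike.norm_conj, Complex.norm_of_nonneg hp] at htri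
    linarith
  have herr : ‖r - ((‖f‖ ^ 2 * p : ℝ) : ℂ)‖ ≤ ‖f‖ ^ 2 * p := by
    have hsplit : r - ((‖f‖ ^ 2 * p : ℝ) : ℂ) = (r - f * q) + f * (q - conj f * p) := by
      push_cast
      rw [← Complex.mul_conj']
      ring
    calc ‖r - ((‖f‖ ^ 2 * p : ℝ) : ℂ)‖
        ≤ ‖r - f * q‖ + ‖f‖ * ‖q - conj f * p‖ := by
          rw [hsplit, ← norm_mul]
          exact norm_add_le _ _
      _ ≤ ε * ((‖f‖ + ε) * p) + ‖f‖ * (ε * p) := by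
          gcongr
          exact hr.trans (by gcongr)
      _ = ((‖f‖ + ε) ^ 2 - ‖f‖ ^ 2) * p := by ring
      _ ≤ ‖f‖ ^ 2 * p := by
          gcongr
          linarith
  have hre := (abs_le.1 ((Complex.abs_re_le_norm _).trans herr)).1
  rw [Complex.sub_re, Complex.ofReal_re] at hre
  linarith

variable [DecidableEq α]

lemma ofReal_re_distinctSum_balancedWord :
    ((distinctSum S (balancedWord k z)).re : ℂ) = distinctSum S (balancedWord k z) := by
  have hconj : (conj : ℂ → ℂ) ∘ conj ∘ z = z := funext fun a => Complex.conj_conj (z a)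
  rw [← Complex.conj_eq_iff_re, map_distinctSum]
  apply distinctSum_perm
  simpa [balancedWord, hconj] using List.perm_append_comm

theorem HasLargeSums.re_distinctSum_balancedWord_nonneg {c ε : ℝ}
    (h : HasLargeSums c ε S (balancedWord k z))
    (hε : (‖∑ a ∈ S, z a‖ + ε) ^ 2 ≤ 2 * ‖∑ a ∈ S, z a‖ ^ 2) :
    0 ≤ (distinctSum S (balancedWord k z)).re := by
  induction k with
  | zero => simp [balancedWord]
  | succ k ih =>
    have hp := ih (h.mono (balancedWord_sublist k.le_succ).subperm)
    have hz := h.mono cons_cons_balancedWord_perm.subperm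
    have hconj := (hz.mono (List.sublist_cons_self _ _).subperm).norm_distinctSum_cons_sub_le
    rw [← ofReal_re_distinctSum_balancedWord (k := k), Complex.norm_of_nonneg hp] at hconj
    rw [← distinctSum_perm S cons_cons_balancedWord_perm]
    refine re_nonneg_of_norm_sub_mul_le hp h.nonneg hε ?_ hz.norm_distinctSum_cons_sub_le
    rwa [map_sum]

lemma mul_le_sqrt_mul_of_sq_mul_le {m n c : ℕ} (h : c ^ 2 * m ≤ n) : (c * m : ℝ) ≤ √(m * n) := by
  refine Real.le_sqrt_of_sq_le ?_
  have h' : (c ^ 2 * m : ℝ) ≤ n := by exact_mod_cast h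
  calc (c * m : ℝ) ^ 2 = m * (c ^ 2 * m) := by ring
    _ ≤ (m * n : ℝ) := by gcongr

lemma re_distinctSum_balancedWord_nonneg_of_le_norm_sum (hk : 0 < k) (hkS : 32 ^ 2 * k ≤ #S)
    (hz : ∀ a ∈ S, ‖z a‖ ≤ 1) (hsum : 3 * √(k * #S) ≤ ‖∑ a ∈ S, z a‖) :
    0 ≤ (distinctSum S (balancedWord k z)).re := by
  have hs : √(k * #S) ^ 2 = k * #S := Real.sq_sqrt (by positivity)
  have hks : 32 * k ≤ √(k * #S) := mod_cast mul_le_sqrt_mul_of_sq_mul_le hkS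
  have hk' : (0 : ℝ) < k := Nat.cast_pos.2 hk
  set s := √(k * #S)
  -- `6 / 5 ≤ 3 * (√2 - 1)`, so that `(F + ε) ^ 2 ≤ 2 * F ^ 2` for all `F ≥ 3 * s`.
  have hlarge : HasLargeSums (9 / 5 * s - k) (6 / 5 * s) S (balancedWord k z) := by
    refine ⟨fun g hg a ha => (norm_apply_of_mem_balancedWord hg a).trans_le (hz a ha),
      fun g hg => ?_, ?_, ?_⟩
    · rw [norm_sum_of_mem_balancedWord hg, length_balancedWord]
      push_cast
      linarith
    · rw [length_balancedWord]
      push_cast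
      linarith
    · rw [length_balancedWord]
      push_cast
      nlinarith
  exact hlarge.re_distinctSum_balancedWord_nonneg (by nlinarith)

lemma norm_distinctSum_balancedWord_le_of_norm_sum_le (hk : 0 < k) (hkS : 32 ^ 2 * k ≤ #S)
    (hz : ∀ a ∈ S, ‖z a‖ ≤ 1) (hsum : ‖∑ a ∈ S, z a‖ ≤ 3 * √(k * #S)) :
    ‖distinctSum S (balancedWord k z)‖ ≤ (13 * k * #S) ^ k := by
  have hs : √(k * #S) ^ 2 = k * #S := Real.sq_sqrt (by positivity)
  have hks : 32 * k ≤ √(k * #S) := mod_cast mul_le_sqrt_mul_of_sq_mul_le hkS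
  have hk' : (0 : ℝ) < k := Nat.cast_pos.2 hk
  set s := √(k * #S)
  have hbound : ‖distinctSum S (balancedWord k z)‖ ≤
      (18 / 5 * s) ^ (balancedWord k z).length := by
    refine norm_distinctSum_le_pow (F := 3 * s + k) (by linarith)
      (fun g hg a ha => (norm_apply_of_mem_balancedWord hg a).trans_le (hz a ha))
      (fun g hg => ?_) ?_
    · rw [norm_sum_of_mem_balancedWord hg, length_balancedWord]
      push_cast
      linarith
    · rw [length_balancedWord]
      push_cast
      nlinarith
  calc ‖distinctSum S (balancedWord k z)‖
      ≤ ((18 / 5 * s) ^ 2) ^ k := by rwa [← pow_mul, ← length_balancedWord (z := z)]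
    _ ≤ (13 * k * #S) ^ k := by
        gcongr
        nlinarith

theorem neg_pow_le_re_distinctSum_balancedWord (hk : 0 < k) (hkS : 32 ^ 2 * k ≤ #S)
    (hz : ∀ a ∈ S, ‖z a‖ ≤ 1) :
    -(13 * k * #S : ℝ) ^ k ≤ (distinctSum S (balancedWord k z)).re := by
  rcases le_total (3 * √(k * #S)) ‖∑ a ∈ S, z a‖ with h | h
  · refine le_trans ?_ (re_distinctSum_balancedWord_nonneg_of_le_norm_sum hk hkS hz h)
    exact neg_nonpos.2 (by positivity)
  · exact (abs_le.1 ((Complex.abs_re_le_norm _).trans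
      (norm_distinctSum_balancedWord_le_of_norm_sum_le hk hkS hz h))).1

end BalancedWord

section AddChar

variable {α G : Type*} [DecidableEq α] [AddCommGroup G]

lemma addChar_map_sum_eq_prod {ι R : Type*} [CommMonoid R] (ψ : AddChar G R) (s : Finset ι)
    (f : ι → G) : ψ (∑ i ∈ s, f i) = ∏ i ∈ s, ψ (f i) :=
  map_prod ψ.toMonoidHom (fun i => Multiplicative.ofAdd (f i)) s

/-- The solutions of `φ x₁ + ⋯ + φ xₖ = φ y₁ + ⋯ + φ yₖ` in `2k` pairwise distinct elements of `A`,
encoded as the tuple `(x₁, …, xₖ, y₁, …, yₖ)`. -/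
def distinctSolutions [DecidableEq G] (φ : α → G) (k : ℕ) (A : Finset α) :
    Finset (Fin (k + k) → α) :=
  {x ∈ distinctTuples A (k + k) |
    ∑ i : Fin k, φ (x (i.castAdd k)) = ∑ i : Fin k, φ (x (i.natAdd k))}

variable {φ : α → G} {k : ℕ} {A : Finset α}

lemma distinctSum_balancedWord (z : α → ℂ) :
    distinctSum A (balancedWord k z) = ∑ x ∈ distinctTuples A (k + k),
      (∏ i : Fin k, z (x (i.castAdd k))) * ∏ i : Fin k, conj (z (x (i.natAdd k))) := by
  have hofFn : balancedWord k z =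
      List.ofFn (Fin.append (fun _ : Fin k => z) fun _ : Fin k => conj ∘ z) := by
    rw [List.ofFn_fin_append, List.ofFn_const, List.ofFn_const, balancedWord]
  simp only [hofFn, distinctSum_ofFn, Fin.prod_univ_add, Fin.append_left, Fin.append_right,
    Function.comp_apply]

lemma distinctSum_balancedWord_addChar [Finite G] (ψ : AddChar G ℂ) :
    distinctSum A (balancedWord k (ψ ∘ φ)) = ∑ x ∈ distinctTuples A (k + k),
      ψ (∑ i : Fin k, φ (x (i.castAdd k)) - ∑ i : Fin k, φ (x (i.natAdd k))) := by
  simp only [distinctSum_balancedWord, Function.comp_apply, sub_eq_add_neg, AddChar.map_add_eq_mul,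
    AddChar.map_neg_eq_conj, addChar_map_sum_eq_prod, map_prod]

variable [Fintype G]

lemma sum_distinctSum_balancedWord_addChar [DecidableEq G] :
    ∑ ψ : AddChar G ℂ, distinctSum A (balancedWord k (ψ ∘ φ)) =
      Fintype.card G * #(distinctSolutions φ k A) := by
  simp only [distinctSum_balancedWord_addChar]
  rw [sum_comm]
  simp only [AddChar.sum_apply_eq_ite, sub_eq_zero, distinctSolutions]
  rw [← sum_filter, sum_const, nsmul_eq_mul, mul_comm]

theorem descFactorial_le_card_mul_card_distinctSolutions_add [DecidableEq G] (φ : α → G)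
    (hk : 0 < k) (hkA : 32 ^ 2 * k ≤ #A) :
    ((#A).descFactorial (2 * k) : ℝ) ≤
      Fintype.card G * #(distinctSolutions φ k A) + (Fintype.card G - 1) * (13 * k * #A) ^ k := by
  have hone : balancedWord k ((1 : AddChar G ℂ) ∘ φ) = List.replicate (2 * k) 1 := by
    have : conj ∘ (1 : α → ℂ) = 1 := funext fun _ => map_one conj
    rw [AddChar.coe_one, Pi.one_comp, balancedWord, this, two_mul, List.replicate_add]
  have hpart : ∀ ψ : AddChar G ℂ, -(13 * k * #A : ℝ) ^ k ≤
      (distinctSum A (balancedWord k (ψ ∘ φ))).re := fun ψ =>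
    neg_pow_le_re_distinctSum_balancedWord hk hkA fun a _ => (AddChar.norm_apply ψ (φ a)).le
  have hrest := card_nsmul_le_sum (univ.erase (1 : AddChar G ℂ)) _ _ fun ψ _ => hpart ψ
  have hsum := congrArg Complex.re (sum_distinctSum_balancedWord_addChar (φ := φ) (k := k) (A := A))
  rw [← add_sum_erase _ _ (mem_univ (1 : AddChar G ℂ)), hone, distinctSum_replicate_one,
    Complex.add_re, Complex.re_sum, ← Nat.cast_mul, Complex.natCast_re, Complex.natCast_re,
    Nat.cast_mul] at hsum
  rw [card_erase_of_mem (mem_univ _), card_univ, AddChar.card_eq, nsmul_eq_mul,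
    Nat.cast_pred Fintype.card_pos] at hrest
  linarith

end AddChar

section Integers

lemma intCast_zmod_inj_of_mem_Ico {n : ℕ} {a b : ℤ} (ha : a ∈ Ico 0 (n : ℤ))
    (hb : b ∈ Ico 0 (n : ℤ)) (h : (a : ZMod n) = b) : a = b := by
  rw [mem_Ico] at ha hb
  rw [ZMod.intCast_eq_intCast_iff, Int.ModEq, Int.emod_eq_of_lt ha.1 ha.2,
    Int.emod_eq_of_lt hb.1 hb.2] at h
  exact h

lemma sum_mem_Ico_of_forall_mem_Icc {k N : ℕ} {x : Fin k → ℤ}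
    (hx : ∀ i, x i ∈ Icc 1 (N : ℤ)) : ∑ i, x i ∈ Ico 0 ((k * N + 1 : ℕ) : ℤ) := by
  simp only [mem_Icc] at hx
  have hle : ∑ i, x i ≤ k * N := by
    simpa using sum_le_card_nsmul univ x N fun i _ => (hx i).2
  refine mem_Ico.2 ⟨sum_nonneg fun i _ => zero_le_one.trans (hx i).1, ?_⟩
  push_cast
  exact Int.lt_add_one_of_le hle

lemma one_sub_sq_div_mul_pow_le_descFactorial {m n : ℕ} (hn : 0 < n) (hmn : m ≤ n) :
    (1 - m ^ 2 / n : ℝ) * n ^ m ≤ n.descFactorial m := by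
  have hn' : (0 : ℝ) < n := Nat.cast_pos.2 hn
  have hmn' : (m / n : ℝ) ≤ 1 := (div_le_one hn').2 (Nat.cast_le.2 hmn)
  have hbernoulli : 1 + (m : ℝ) * -(m / n) ≤ (1 + -(m / n : ℝ)) ^ m :=
    one_add_mul_le_pow (by linarith) m
  calc (1 - m ^ 2 / n : ℝ) * n ^ m
      = (1 + (m : ℝ) * -(m / n)) * n ^ m := by ring
    _ ≤ (1 + -(m / n : ℝ)) ^ m * n ^ m := by gcongr
    _ = (n - m : ℝ) ^ m := by
        rw [← mul_pow]
        field_simp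
        ring
    _ ≤ ((n + 1 - m : ℕ) : ℝ) ^ m := by
        rw [Nat.cast_sub (by lia), Nat.cast_add_one]
        gcongr
        · exact sub_nonneg.2 (Nat.cast_le.2 hmn)
        · exact (lt_add_one _).le
    _ ≤ n.descFactorial m := mod_cast Nat.pow_sub_le_descFactorial n m

namespace IsWeakBkSet

variable {k N : ℕ} {A : Finset ℤ}

lemma distinctSolutions_eq_empty (hweak : IsWeakBkSet k A) (hA : A ⊆ Icc 1 (N : ℤ)) :
    distinctSolutions (Int.cast : ℤ → ZMod (k * N + 1)) k A = ∅ := by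
  refine filter_eq_empty_iff.2 fun x hx hsum => ?_
  obtain ⟨hxA, hinj⟩ := mem_distinctTuples.1 hx
  have hsum' : ∑ i : Fin k, x (i.castAdd k) = ∑ i : Fin k, x (i.natAdd k) := by
    refine intCast_zmod_inj_of_mem_Ico (sum_mem_Ico_of_forall_mem_Icc fun i => hA (hxA _))
      (sum_mem_Ico_of_forall_mem_Icc fun i => hA (hxA _)) ?_
    rwa [Int.cast_sum, Int.cast_sum]
  obtain ⟨i, j, hij⟩ := hweak _ _ (fun i => hxA _) (fun i => hxA _) hsum'
    (hinj.comp (Fin.castAdd_injective k k)) (hinj.comp (Fin.natAdd_injective k k))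
  have hval := congrArg Fin.val (hinj hij)
  simp only [Fin.val_castAdd, Fin.val_natAdd] at hval
  lia

lemma three_fourths_mul_card_pow_le (hweak : IsWeakBkSet k A) (hA : A ⊆ Icc 1 (N : ℤ))
    (hk : 0 < k) (hkA : 32 ^ 2 * k ≤ #A) (hkA' : 4 * (2 * k) ^ 2 ≤ #A) :
    3 / 4 * (#A : ℝ) ^ k ≤ k * N * (13 * k) ^ k := by
  have hn : 0 < #A := by lia
  have hn' : (0 : ℝ) < #A := Nat.cast_pos.2 hn
  have hdesc : 3 / 4 * (#A : ℝ) ^ (2 * k) ≤ (#A).descFactorial (2 * k) := by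
    refine le_trans ?_ (one_sub_sq_div_mul_pow_le_descFactorial hn (by nlinarith))
    have hratio : ((2 * k : ℕ) ^ 2 / #A : ℝ) ≤ 1 / 4 := by
      rw [div_le_iff₀ hn']
      have : (4 * (2 * k : ℕ) ^ 2 : ℝ) ≤ #A := mod_cast hkA'
      linarith
    gcongr
    linarith
  have hcount := descFactorial_le_card_mul_card_distinctSolutions_add
    (Int.cast : ℤ → ZMod (k * N + 1)) hk hkA
  rw [hweak.distinctSolutions_eq_empty hA, card_empty, ZMod.card] at hcount
  push_cast at hcount
  refine le_of_mul_le_mul_right ?_ (pow_pos hn' k)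
  calc 3 / 4 * (#A : ℝ) ^ k * #A ^ k = 3 / 4 * #A ^ (2 * k) := by ring
    _ ≤ k * N * (13 * k * #A) ^ k := by linarith
    _ = k * N * (13 * k) ^ k * #A ^ k := by ring

end IsWeakBkSet

lemma four_thirds_mul_mul_pow_le {k : ℕ} (hk : 2 ≤ k) :
    4 / 3 * (k * (13 * k) ^ k) ≤ (16 * (k : ℝ) ^ (3 / 2 : ℝ)) ^ k := by
  have hk' : (2 : ℝ) ≤ k := mod_cast hk
  have hsqrt : √(k : ℝ) ^ 2 = k := Real.sq_sqrt (by positivity)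
  have hone : 1 ≤ 16 / 13 * √(k : ℝ) := by
    have := Real.one_le_sqrt.2 (one_le_two.trans hk')
    linarith
  calc 4 / 3 * (k * (13 * k) ^ k)
      ≤ (16 / 13 * √(k : ℝ)) ^ 2 * (13 * k) ^ k := by
        rw [← mul_assoc, mul_pow _ √(k : ℝ), hsqrt]
        gcongr
        norm_num
    _ ≤ (16 / 13 * √(k : ℝ)) ^ k * (13 * k) ^ k := by gcongr
    _ = (16 * (k : ℝ) ^ (3 / 2 : ℝ)) ^ k := by
        rw [← mul_pow, show (3 / 2 : ℝ) = 1 + 1 / 2 by norm_num, Real.rpow_add (by positivity),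
          Real.rpow_one, ← Real.sqrt_eq_rpow]
        ring

lemma sixteen_mul_rpow_mul_two_mul_rpow (k : ℕ) :
    16 * (k : ℝ) ^ (3 / 2 : ℝ) * (2 * (k : ℝ) ^ (9 / 2 : ℝ)) = 32 * k ^ 6 := by
  have hexp : (k : ℝ) ^ (3 / 2 : ℝ) * (k : ℝ) ^ (9 / 2 : ℝ) = k ^ 6 := by
    rw [← Real.rpow_add_of_nonneg (by positivity) (by norm_num) (by norm_num),
      ← Real.rpow_natCast]
    norm_num
  rw [← hexp]
  ring

lemma le_mul_rpow_one_div_of_pow_le {k : ℕ} (hk : k ≠ 0) {a c x : ℝ} (hc : 0 ≤ c)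
    (hx : 0 ≤ x) (h : a ^ k ≤ c ^ k * x) : a ≤ c * x ^ (1 / k : ℝ) := by
  refine le_of_pow_le_pow_left₀ hk (by positivity) ?_
  rwa [mul_pow, one_div, Real.rpow_inv_natCast_pow hx hk]

lemma IsWeakBkSet.card_pow_le {k N : ℕ} {A : Finset ℤ} (hweak : IsWeakBkSet k A)
    (hA : A ⊆ Icc 1 (N : ℤ)) (hk : 2 ≤ k) (hkA : 32 * k ^ 6 ≤ #A) :
    (#A : ℝ) ^ k ≤ (16 * (k : ℝ) ^ (3 / 2 : ℝ)) ^ k * N := by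
  have hpow : 2 ^ 5 * k ≤ k ^ 6 := by
    rw [pow_succ k]
    gcongr
  have hsq : k ^ 2 ≤ k ^ 6 := Nat.pow_le_pow_right (by lia) (by lia)
  have hbound := hweak.three_fourths_mul_card_pow_le hA (by lia) (by lia) (by lia)
  calc (#A : ℝ) ^ k ≤ 4 / 3 * (k * (13 * k) ^ k) * N := by linarith
    _ ≤ (16 * (k : ℝ) ^ (3 / 2 : ℝ)) ^ k * N := by
        gcongr
        exact four_thirds_mul_mul_pow_le hk

end Integers

theorem main_theorem (k N : ℕ) (hk : 1 ≤ k)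
    (hN : (2 * (k : ℝ) ^ ((9 : ℝ) / 2)) ^ k ≤ (N : ℝ))
    (A : Finset ℤ) (hA : A ⊆ Finset.Icc 1 (N : ℤ)) (hweak : IsWeakBkSet k A) :
    (A.card : ℝ) ≤ 16 * (k : ℝ) ^ ((3 : ℝ) / 2) * (N : ℝ) ^ ((1 : ℝ) / k) := by
  refine le_mul_rpow_one_div_of_pow_le (by lia) (by positivity) (by positivity) ?_
  rcases hk.eq_or_lt with rfl | hk
  · have hcard : (#A : ℝ) ≤ N := by simpa using card_le_card hA
    simp only [pow_one, Nat.cast_one, Real.one_rpow]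
    linarith [N.cast_nonneg (α := ℝ)]
  rcases le_total (32 * k ^ 6) #A with hkA | hkA
  · exact hweak.card_pow_le hA hk hkA
  · calc (#A : ℝ) ^ k ≤ (32 * k ^ 6) ^ k := by gcongr; exact_mod_cast hkA
      _ = (16 * (k : ℝ) ^ (3 / 2 : ℝ)) ^ k * (2 * (k : ℝ) ^ (9 / 2 : ℝ)) ^ k := by
          rw [← sixteen_mul_rpow_mul_two_mul_rpow, mul_pow _ (2 * _)]
      _ ≤ (16 * (k : ℝ) ^ (3 / 2 : ℝ)) ^ k * N := by gcongr
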